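/- Let k ≥ 1 and let G be a directed graph on a finite vertex set V (with no loops) in which every vertex has out-degree at most k and in-degree at most k. Then there exists a function f : V → {1,…,2k+1} such that f(u) ≠ f(v) for every arc (u,v) of G, and the sizes of any two level sets |f⁻¹(x)| and |f⁻¹(y)| differ by at most 1. -/

import Mathlib

section EquitableColoring

open scoped Classical

open Finset Function Relation

variable {V α : Type*}

/-- `v` can be reached from `a` by a path of `r` that stays inside `D`. -/
def ReachIn (r : α → α → Prop) (D : Finset α) (a v : α) : Prop :=
  ReflTransGen (fun x y => x ∈ D ∧ y ∈ D ∧ r x y) a v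

/-- The members of `S` with colour `c`. -/
noncomputable def colorClass (S : Finset V) (f : V → α) (c : α) : Finset V :=
  S.filter fun x => f x = c

/-- The neighbours of `x` inside `S`. -/
noncomputable def nbrsIn (G : SimpleGraph V) (S : Finset V) (x : V) : Finset V :=
  S.filter fun y => G.Adj x y

theorem mem_colorClass {S : Finset V} {f : V → α} {c : α} {x : V} :
    x ∈ colorClass S f c ↔ x ∈ S ∧ f x = c :=
  mem_filter

theorem mem_nbrsIn {G : SimpleGraph V} {S : Finset V} {x y : V} :
    y ∈ nbrsIn G S x ↔ y ∈ S ∧ G.Adj x y :=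
  mem_filter

/-- `f` is a proper colouring of the subgraph of `G` induced on `S`. -/
def ProperOn (G : SimpleGraph V) (S : Finset V) (f : V → α) : Prop :=
  ∀ x ∈ S, ∀ y ∈ S, G.Adj x y → f x ≠ f y

/-- Some vertex of `S` with colour `a` has no neighbour with colour `b`. -/
def Movable (G : SimpleGraph V) (S : Finset V) (f : V → α) (a b : α) : Prop :=
  ∃ x ∈ S, f x = a ∧ ∀ y ∈ S, f y = b → ¬ G.Adj x y

theorem ReachIn.mono {r r' : α → α → Prop} {D D' : Finset α} {a v : α} (hD : D ⊆ D')
    (hr : ∀ x ∈ D, ∀ y ∈ D, r x y → r' x y) (h : ReachIn r D a v) : ReachIn r' D' a v :=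
  ReflTransGen.mono (fun x y hxy => ⟨hD hxy.1, hD hxy.2.1, hr x hxy.1 y hxy.2.1 hxy.2.2⟩) _ _ h

theorem ReachIn.mem_right {r : α → α → Prop} {D : Finset α} {a v : α} (ha : a ∈ D)
    (h : ReachIn r D a v) : v ∈ D := by
  induction h with
  | refl => exact ha
  | tail _ h _ => exact h.2.1

theorem ReachIn.head {r : α → α → Prop} {D : Finset α} {a b v : α} (ha : a ∈ D) (hb : b ∈ D)
    (hab : r a b) (h : ReachIn r D b v) : ReachIn r D a v :=
  ReflTransGen.head ⟨ha, hb, hab⟩ h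

/-- A path either avoids `w`, or the part after its last visit to `w` does. -/
theorem ReachIn.avoid_or {r : α → α → Prop} {D : Finset α} {a v w : α} (hvw : v ≠ w)
    (h : ReachIn r D a v) :
    (a ≠ w ∧ ReachIn r (D.erase w) a v) ∨
      (w ∈ D ∧ ∃ b ∈ D.erase w, r w b ∧ ReachIn r (D.erase w) b v) := by
  induction h using ReflTransGen.head_induction_on with
  | refl => exact Or.inl ⟨hvw, ReflTransGen.refl⟩
  | @head x y hxy _ ih =>
    rcases ih with ⟨hy, ih⟩ | ih
    · by_cases hx : x = w
      · subst hx
        exact Or.inr ⟨hxy.1, y, mem_erase.2 ⟨hy, hxy.2.1⟩, hxy.2.2, ih⟩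
      · exact Or.inl ⟨hx, ReachIn.head (mem_erase.2 ⟨hx, hxy.1⟩) (mem_erase.2 ⟨hy, hxy.2.1⟩)
          hxy.2.2 ih⟩
    · exact Or.inr ih

theorem ReachIn.exists_step {r : α → α → Prop} {D : Finset α} {a v : α} (hva : v ≠ a)
    (h : ReachIn r D a v) :
    ∃ b ∈ D.erase a, r a b ∧ ReachIn r (D.erase a) b v := by
  rcases h.avoid_or hva with h | h
  · exact absurd rfl h.1
  · exact h.2

/-- In a finite digraph in which everything reaches `v`, there are a vertex `U` and a nonempty set
`T` all of whose members are inessential for reaching `v`, and whose out-neighbours lie in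
`insert U T`. -/
theorem exists_terminal_set (r : α → α → Prop) (A : Finset α) (v : α) (hv : v ∈ A)
    (hA : ∀ a ∈ A, ReachIn r A a v) (h2 : ∃ a ∈ A, a ≠ v) :
    ∃ U ∈ A, ∃ T ⊆ A, T.Nonempty ∧ U ∉ T ∧ v ∉ T ∧
      (∀ W ∈ T, ∀ X ∈ A, X ≠ W → ReachIn r (A.erase W) X v) ∧
      ∀ X ∈ T, ∀ Y ∈ A, r X Y → Y = U ∨ Y ∈ T := by
  let T : α → Finset α := fun W => A.filter fun X => X ≠ W ∧ ¬ ReachIn r (A.erase W) X v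
  have hTv : v ∈ A.filter fun W => (T W).Nonempty := by
    obtain ⟨a, ha, hav⟩ := h2
    refine mem_filter.2 ⟨hv, a, mem_filter.2 ⟨ha, hav, fun h => ?_⟩⟩
    have := h.mem_right (mem_erase.2 ⟨hav, ha⟩)
    simp at this
  obtain ⟨U, hU, hmin⟩ := exists_min_image _ (fun W => (T W).card) ⟨v, hTv⟩
  rw [mem_filter] at hU
  have hvT : v ∉ T U := by
    intro h
    exact (mem_filter.1 h).2.2 ReflTransGen.refl
  refine ⟨U, hU.1, T U, filter_subset _ _, hU.2, by simp [T], hvT, ?_, ?_⟩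
  · intro W hW X hX hXW
    by_contra hXn
    have hWA := (mem_filter.1 hW).1
    have hWU := (mem_filter.1 hW).2.1
    have hWn := (mem_filter.1 hW).2.2
    have hvW : v ≠ W := fun h => hvT (h ▸ hW)
    have hle := hmin W (mem_filter.2 ⟨hWA, X, mem_filter.2 ⟨hX, hXW, hXn⟩⟩)
    have hlift : ∀ Z, ReachIn r (A.erase U) Z v → ReachIn r (A.erase W) Z v := by
      intro Z hZ
      by_cases hvU : v = U
      · subst hvU
        by_cases hZv : Z = v
        · subst hZv; exact ReflTransGen.refl
        · rcases ReflTransGen.cases_tail hZ with h | ⟨b, _, hb⟩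
          · exact absurd h.symm hZv
          · simp at hb
      · rcases hZ.avoid_or hvW with h | h
        · exact h.2.mono (erase_subset_erase _ (erase_subset _ _)) (fun _ _ _ _ h => h)
        · obtain ⟨hWU', b, hb, hWb, hbv⟩ := h
          exact absurd (ReachIn.head hWU' (mem_of_mem_erase hb) hWb
            (hbv.mono (erase_subset _ _) (fun _ _ _ _ h => h))) hWn
    have hss : T W ⊂ T U := by
      rw [ssubset_iff_of_subset]
      · exact ⟨W, hW, by simp [T]⟩
      · intro Z hZ
        obtain ⟨hZA, hZW, hZn⟩ := mem_filter.1 hZ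
        refine mem_filter.2 ⟨hZA, ?_, fun h => hZn (hlift Z h)⟩
        rintro rfl
        by_cases hvU : v = Z
        · subst hvU; exact hZn ReflTransGen.refl
        · obtain ⟨b, hb, hZb, hbv⟩ := (hA Z hZA).exists_step hvU
          have hbW : b ≠ W := fun h => hWn (h ▸ hbv)
          exact hZn (ReachIn.head (mem_erase.2 ⟨hZW, hZA⟩)
            (mem_erase.2 ⟨hbW, mem_of_mem_erase hb⟩) hZb (hlift b hbv))
    exact absurd (card_lt_card hss) (not_lt.2 hle)
  · intro X hX Y hY hXY
    by_contra hcon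
    push Not at hcon
    obtain ⟨hXA, hXU, hXn⟩ := mem_filter.1 hX
    have hYr : ReachIn r (A.erase U) Y v := by
      by_contra h
      exact hcon.2 (mem_filter.2 ⟨hY, hcon.1, h⟩)
    exact hXn (ReachIn.head (mem_erase.2 ⟨hXU, hXA⟩) (mem_erase.2 ⟨hcon.1, hY⟩) hXY hYr)

theorem card_colorClass_update {S : Finset V} (f : V → α) {x : V} (hx : x ∈ S) (b c : α) :
    (colorClass S (update f x b) c).card + (if c = f x then 1 else 0) =
      (colorClass S f c).card + if c = b then 1 else 0 := by
  have key : ∀ g : V → α, (colorClass S g c).card =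
      ((S.erase x).filter fun y => g y = c).card + if c = g x then 1 else 0 := by
    intro g
    unfold colorClass
    conv_lhs => rw [← insert_erase hx, filter_insert]
    split_ifs with h1 h2 h2
    · rw [card_insert_of_notMem (by simp)]
    · exact absurd h1.symm h2
    · exact absurd h2.symm h1
    · rfl
  rw [key, key f]
  have : ((S.erase x).filter fun y => update f x b y = c) =
      (S.erase x).filter fun y => f y = c := by
    refine filter_congr fun y hy => ?_
    rw [update_of_ne (ne_of_mem_erase hy)]
  rw [this, update_self]
  omega

theorem ProperOn.mono {G : SimpleGraph V} {S S' : Finset V} {f : V → α} (hf : ProperOn G S f)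
    (h : S' ⊆ S) : ProperOn G S' f :=
  fun x hx y hy => hf x (h hx) y (h hy)

theorem ProperOn.update {G : SimpleGraph V} {S : Finset V} {f : V → α} {x : V} {b : α}
    (hf : ProperOn G (S.erase x) f) (hx : ∀ y ∈ S, y ≠ x → f y = b → ¬ G.Adj x y) :
    ProperOn G S (update f x b) := by
  intro y hy z hz hyz
  by_cases hyx : y = x
  · subst hyx
    rw [update_self, update_of_ne hyz.ne']
    exact fun h => hx z hz hyz.ne' h.symm hyz
  · by_cases hzx : z = x
    · subst hzx
      rw [update_self, update_of_ne hyx]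
      exact fun h => hx y hy hyx h hyz.symm
    · rw [update_of_ne hyx, update_of_ne hzx]
      exact hf y (mem_erase.2 ⟨hyx, hy⟩) z (mem_erase.2 ⟨hzx, hz⟩) hyz

/-- Moving one vertex along each step of a path from `a` to `v` shifts one unit of class size from
`a` to `v`. -/
theorem exists_shift (G : SimpleGraph V) (S : Finset V) (f : V → α) (hf : ProperOn G S f) (v : α)
    (D : Finset α) : ∀ a ∈ D, ReachIn (Movable G S f) D a v →
    ∃ f' : V → α, ProperOn G S f' ∧ (∀ x ∈ S, f' x ≠ f x → f x ∈ D ∧ f' x ∈ D) ∧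
      (∀ c, (colorClass S f' c).card + (if c = a then 1 else 0) =
        (colorClass S f c).card + if c = v then 1 else 0) ∧
      ∀ x ∈ S, f' x = a → f x = a := by
  induction D using Finset.strongInduction with
  | H D ih =>
    intro a ha hav
    by_cases hva : v = a
    · subst hva
      exact ⟨f, hf, fun x _ h => absurd rfl h, fun c => rfl, fun x _ h => h⟩
    · have hv := hav.mem_right ha
      obtain ⟨b, hb, ⟨x, hxS, hxa, hxb⟩, hbv⟩ := hav.exists_step hva
      obtain ⟨f', hf', hD, hcard, hsub⟩ := ih (D.erase a) (erase_ssubset ha) b hb hbv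
      have hx' : f' x = a := by
        by_contra h
        have := (hD x hxS (hxa ▸ h)).1
        simp [hxa] at this
      have hba := ne_of_mem_erase hb
      refine ⟨update f' x b, (hf'.mono (erase_subset _ _)).update
        fun y hy _ hyb => hxb y hy (hsub y hy hyb), ?_, ?_, ?_⟩
      · intro y hy hne
        by_cases hyx : y = x
        · subst hyx
          rw [update_self, hxa]
          exact ⟨ha, mem_of_mem_erase hb⟩
        · rw [update_of_ne hyx] at hne ⊢
          exact (hD y hy hne).imp mem_of_mem_erase mem_of_mem_erase
      · intro c
        have h1 := card_colorClass_update f' hxS b c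
        have h2 := hcard c
        rw [hx'] at h1
        omega
      · intro y hy hya
        by_cases hyx : y = x
        · subst hyx; exact hxa
        · rw [update_of_ne hyx] at hya
          by_contra h
          have := (hD y hy (by rw [hya]; exact Ne.symm h)).2
          simp [hya] at this


theorem sum_card_nbrsIn (G : SimpleGraph V) (S : Finset V) (f : V → α) (A : Finset α) (x : V) :
    ∑ c ∈ A, (nbrsIn G (colorClass S f c) x).card +
      (nbrsIn G (S.filter fun y => f y ∉ A) x).card = (nbrsIn G S x).card := by
  have h1 : ∑ c ∈ A, (nbrsIn G (colorClass S f c) x).card =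
      ((nbrsIn G S x).filter fun y => f y ∈ A).card := by
    rw [card_eq_sum_card_fiberwise (s := (nbrsIn G S x).filter fun y => f y ∈ A) (f := f) (t := A)
      (fun y hy => (mem_filter.1 hy).2)]
    refine sum_congr rfl fun c hc => congrArg card ?_
    ext y
    simp only [nbrsIn, colorClass, mem_filter]
    constructor
    · rintro ⟨⟨h1, rfl⟩, h3⟩; exact ⟨⟨⟨h1, h3⟩, hc⟩, rfl⟩
    · rintro ⟨⟨⟨h1, h3⟩, _⟩, h2⟩; exact ⟨⟨h1, h2⟩, h3⟩
  have h2 : nbrsIn G (S.filter fun y => f y ∉ A) x =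
      (nbrsIn G S x).filter fun y => ¬ f y ∈ A := by
    ext y
    simp only [nbrsIn, mem_filter]
    tauto
  rw [h1, h2, card_filter_add_card_filter_not]

theorem card_add_card_nbrsIn_le (G : SimpleGraph V) (S : Finset V) (f : V → α) {A A' : Finset α}
    (hA : A' ⊆ A) (x : V) (h : ∀ c ∈ A', ∃ z ∈ S, f z = c ∧ G.Adj x z) :
    A'.card + (nbrsIn G (S.filter fun y => f y ∉ A) x).card ≤ (nbrsIn G S x).card := by
  rw [← sum_card_nbrsIn G S f A x, card_eq_sum_ones]
  refine Nat.add_le_add_right (le_trans (sum_le_sum fun c hc => ?_) (sum_le_sum_of_subset hA)) _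
  obtain ⟨z, hz, hzc, hxz⟩ := h c hc
  exact card_pos.2 ⟨z, by simp [nbrsIn, colorClass, hz, hzc, hxz]⟩

/-- `z` is the only neighbour of `y` in the colour class of `z`. -/
def Solo (G : SimpleGraph V) (S : Finset V) (f : V → α) (z y : V) : Prop :=
  G.Adj y z ∧ ∀ w ∈ S, f w = f z → G.Adj y w → w = z

theorem sum_sum_adj (G : SimpleGraph V) (B K : Finset V) (w : V → ℕ) :
    ∑ y ∈ B, ∑ z ∈ nbrsIn G K y, w z = ∑ z ∈ K, (nbrsIn G B z).card * w z := by
  simp only [nbrsIn, sum_filter, card_filter, sum_mul]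
  rw [sum_comm]
  refine sum_congr rfl fun z _ => sum_congr rfl fun y _ => ?_
  rw [G.adj_comm]
  split_ifs <;> simp

/-- If the solo vertices of the class `W` have few neighbours in `B`, then the
remaining vertices must be allowed to have many. -/
theorem lt_of_solo_bound (G : SimpleGraph V) (S : Finset V) (f : V → α) (B : Finset V) (W : α)
    (q s t : ℕ) (hB : B.card = q * s + 1) (hW : (colorClass S f W).card = s)
    (hne : ∀ y ∈ B, ∃ z ∈ S, f z = W ∧ G.Adj y z)
    (hsolo : ∀ z ∈ S, f z = W → (∃ y ∈ B, Solo G S f z y) → (nbrsIn G B z).card ≤ q)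
    (hall : ∀ z ∈ S, f z = W → (nbrsIn G B z).card ≤ q + t) : q < t := by
  by_contra hqt
  push Not at hqt
  let w : V → ℕ := fun z => if ∃ y ∈ B, Solo G S f z y then 2 else 1
  have h1 : ∑ _y ∈ B, 2 ≤ ∑ y ∈ B, ∑ z ∈ nbrsIn G (colorClass S f W) y, w z := by
    refine sum_le_sum fun y hy => ?_
    obtain ⟨z, hz, hzW, hyz⟩ := hne y hy
    have hzm : z ∈ nbrsIn G (colorClass S f W) y := by simp [nbrsIn, colorClass, hz, hzW, hyz]
    by_cases hs : Solo G S f z y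
    · calc 2 = w z := by simp only [w]; rw [if_pos ⟨y, hy, hs⟩]
        _ ≤ _ := single_le_sum (fun _ _ => Nat.zero_le _) hzm
    · have hex : ∃ z' ∈ S, f z' = f z ∧ G.Adj y z' ∧ z' ≠ z := by
        by_contra hcon
        push Not at hcon
        exact hs ⟨hyz, hcon⟩
      obtain ⟨z', hz', hzz', hyz', hne'⟩ := hex
      have hzm' : z' ∈ nbrsIn G (colorClass S f W) y := by
        simp [nbrsIn, colorClass, hz', hzz', hzW, hyz']
      have hcard : 2 ≤ (nbrsIn G (colorClass S f W) y).card :=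
        one_lt_card.2 ⟨z', hzm', z, hzm, hne'⟩
      calc 2 ≤ _ := hcard
        _ = ∑ _z ∈ nbrsIn G (colorClass S f W) y, 1 := card_eq_sum_ones _
        _ ≤ _ := sum_le_sum fun z _ => by simp only [w]; split_ifs <;> omega
  have h2 : ∑ z ∈ colorClass S f W, (nbrsIn G B z).card * w z ≤
      ∑ _z ∈ colorClass S f W, 2 * q := by
    refine sum_le_sum fun z hz => ?_
    obtain ⟨hzS, hzW⟩ := mem_filter.1 hz
    by_cases h : ∃ y ∈ B, Solo G S f z y
    · have := hsolo z hzS hzW h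
      simp only [w]; rw [if_pos h]; omega
    · have := hall z hzS hzW
      simp only [w]; rw [if_neg h]; omega
  rw [sum_sum_adj] at h1
  have h3 := h1.trans h2
  rw [sum_const, sum_const, hB, hW, smul_eq_mul, smul_eq_mul] at h3
  nlinarith

theorem exists_solo (G : SimpleGraph V) (S : Finset V) (f : V → α) (A T : Finset α) (U : α)
    (q s : ℕ) (hdeg : ∀ x ∈ S, (nbrsIn G S x).card + 1 ≤ A.card + q)
    (hB : (S.filter fun y => f y ∉ A).card = q * s + 1) (hTA : T ⊆ A) (hUA : U ∈ A) (hUT : U ∉ T)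
    (hT : T.Nonempty) (hTs : ∀ W ∈ T, (colorClass S f W).card = s)
    (hBA : ∀ y ∈ S, f y ∉ A → ∀ c ∈ A, ∃ z ∈ S, f z = c ∧ G.Adj y z)
    (hTn : ∀ x ∈ S, f x ∈ T → ∀ c ∈ A, c ≠ U → c ∉ T → ∃ z ∈ S, f z = c ∧ G.Adj x z) :
    ∃ z ∈ S, f z ∈ T ∧ ∃ y ∈ S, f y ∉ A ∧ Solo G S f z y ∧
      ((∃ X ∈ A, X ≠ f z ∧ ∀ w ∈ S, f w = X → ¬ G.Adj z w) ∨
        ((∀ X ∈ A, X ≠ f z → ∃ w ∈ S, f w = X ∧ G.Adj z w) ∧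
          ∃ y' ∈ S, f y' ∉ A ∧ Solo G S f z y' ∧ y' ≠ y ∧ ¬ G.Adj y y')) := by
  by_contra hcon
  set B := S.filter fun y => f y ∉ A with hBdef
  have hmB : ∀ {y}, y ∈ B ↔ y ∈ S ∧ f y ∉ A := by simp [hBdef]
  have H1 : ∀ z ∈ S, f z ∈ T → ∀ y ∈ B, Solo G S f z y →
      ∀ X ∈ A, X ≠ f z → ∃ w ∈ S, f w = X ∧ G.Adj z w := by
    intro z hz hzT y hy hs X hX hXz
    by_contra h
    push Not at h
    exact hcon ⟨z, hz, hzT, y, (hmB.1 hy).1, (hmB.1 hy).2, hs, Or.inl ⟨X, hX, hXz, h⟩⟩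
  have H2 : ∀ z ∈ S, f z ∈ T → ∀ y ∈ B, Solo G S f z y → ∀ y' ∈ B, Solo G S f z y' →
      y' ≠ y → G.Adj y y' := by
    intro z hz hzT y hy hs y' hy' hs' hne
    by_contra h
    exact hcon ⟨z, hz, hzT, y, (hmB.1 hy).1, (hmB.1 hy).2, hs, Or.inr
      ⟨H1 z hz hzT y hy hs, y', (hmB.1 hy').1, (hmB.1 hy').2, hs', hne, h⟩⟩
  clear hcon
  have hqt : q < T.card := by
    obtain ⟨W, hW⟩ := hT
    refine lt_of_solo_bound G S f B W q s T.card hB (hTs W hW)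
      (fun y hy => hBA y (hmB.1 hy).1 (hmB.1 hy).2 W (hTA hW)) ?_ ?_
    · rintro z hz rfl ⟨y, hy, hs⟩
      have h1 := card_add_card_nbrsIn_le G S f (erase_subset (f z) A) z fun c hc =>
        H1 z hz hW y hy hs c (mem_of_mem_erase hc) (ne_of_mem_erase hc)
      rw [card_erase_of_mem (hTA hW), ← hBdef] at h1
      have := hdeg z hz
      have : 0 < A.card := card_pos.2 ⟨_, hUA⟩
      omega
    · rintro z hz rfl
      have h1 := card_add_card_nbrsIn_le G S f (A := A) (A' := A \ insert U T) sdiff_subset z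
        fun c hc => by
          rw [mem_sdiff, mem_insert, not_or] at hc
          exact hTn z hz hW c hc.1 hc.2.1 hc.2.2
      rw [card_sdiff_of_subset (insert_subset hUA hTA), card_insert_of_notMem hUT,
        ← hBdef] at h1
      have := hdeg z hz
      have := card_le_card (insert_subset hUA hTA)
      rw [card_insert_of_notMem hUT] at this
      omega
  let K : Finset V := S.filter fun z => f z ∈ T
  have hK : K.card = T.card * s := by
    rw [card_eq_sum_card_fiberwise (s := K) (f := f) (t := T) (fun y hy => (mem_filter.1 hy).2),
      ← smul_eq_mul, ← sum_const]
    refine sum_congr rfl fun c hc => ?_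
    rw [← hTs c hc]
    congr 1
    ext y
    simp only [K, colorClass, mem_filter]
    constructor
    · rintro ⟨⟨h1, _⟩, h2⟩; exact ⟨h1, h2⟩
    · rintro ⟨h1, rfl⟩; exact ⟨⟨h1, hc⟩, rfl⟩
  let up : V → Finset V := fun y => K.filter fun z => Solo G S f z y
  let dn : V → Finset V := fun z => B.filter fun y => Solo G S f z y
  have hdB : ∀ y ∈ B, (nbrsIn G B y).card + 1 ≤ q := by
    intro y hy
    have h1 := card_add_card_nbrsIn_le G S f (Subset.refl A) y
      (hBA y (hmB.1 hy).1 (hmB.1 hy).2)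
    rw [← hBdef] at h1
    have := hdeg y (hmB.1 hy).1
    omega
  have hup : ∀ y ∈ B, T.card + 1 + (nbrsIn G B y).card ≤ (up y).card + q := by
    intro y hy
    have h1 := sum_card_nbrsIn G S f A y
    rw [← sum_sdiff hTA, ← hBdef] at h1
    have h2 : (A \ T).card ≤ ∑ c ∈ A \ T, (nbrsIn G (colorClass S f c) y).card := by
      rw [card_eq_sum_ones]
      refine sum_le_sum fun c hc => ?_
      obtain ⟨z, hz, hzc, hyz⟩ := hBA y (hmB.1 hy).1 (hmB.1 hy).2 c (mem_sdiff.1 hc).1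
      exact card_pos.2 ⟨z, by simp [nbrsIn, colorClass, hz, hzc, hyz]⟩
    have h3 : T.card * 2 ≤ ∑ c ∈ T, (nbrsIn G (colorClass S f c) y).card + (up y).card := by
      rw [card_eq_sum_card_fiberwise (s := up y) (f := f) (t := T)
        (fun z hz => (mem_filter.1 (mem_filter.1 hz).1).2), ← sum_add_distrib, ← smul_eq_mul,
        ← sum_const]
      refine sum_le_sum fun c hc => ?_
      obtain ⟨z, hz, hzc, hyz⟩ := hBA y (hmB.1 hy).1 (hmB.1 hy).2 c (hTA hc)
      have hzm : z ∈ nbrsIn G (colorClass S f c) y := by simp [nbrsIn, colorClass, hz, hzc, hyz]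
      by_cases hs : Solo G S f z y
      · have h4 := card_pos.2 ⟨z, hzm⟩
        have h5 : 0 < ((up y).filter fun z => f z = c).card :=
          card_pos.2 ⟨z, by simp [up, K, hz, hzc, hs, hc]⟩
        omega
      · have hex : ∃ z' ∈ S, f z' = f z ∧ G.Adj y z' ∧ z' ≠ z := by
          by_contra hcon
          push Not at hcon
          exact hs ⟨hyz, hcon⟩
        obtain ⟨z', hz', hzz', hyz', hne'⟩ := hex
        have hzm' : z' ∈ nbrsIn G (colorClass S f c) y := by
          simp [nbrsIn, colorClass, hz', hzz', hzc, hyz']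
        have : 1 < (nbrsIn G (colorClass S f c) y).card := one_lt_card.2 ⟨z', hzm', z, hzm, hne'⟩
        omega
    have h4 := hdeg y (hmB.1 hy).1
    rw [card_sdiff_of_subset hTA] at h2
    have := card_le_card hTA
    omega
  have hdn : ∀ y ∈ B, ∀ z ∈ up y, (dn z).card ≤ (nbrsIn G B y).card + 1 := by
    intro y hy z hz
    obtain ⟨hzK, hs⟩ := mem_filter.1 hz
    obtain ⟨hzS, hzT⟩ := mem_filter.1 hzK
    refine (card_le_card (t := insert y (nbrsIn G B y)) fun y' hy' => ?_).trans (card_insert_le _ _)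
    obtain ⟨hy'B, hs'⟩ := mem_filter.1 hy'
    by_cases h : y' = y
    · simp [h]
    · exact mem_insert_of_mem
        (mem_filter.2 ⟨hy'B, H2 z hzS hzT y hy hs y' hy'B hs' h⟩)
  have hlow : ∀ y ∈ B, (T.card : ℚ) ≤ ∑ z ∈ up y, (q : ℚ) / (dn z).card := by
    intro y hy
    set d := (nbrsIn G B y).card with hd
    have hd1 : (d : ℚ) + 1 ≤ q := by exact_mod_cast hdB y hy
    have hd2 : (T.card : ℚ) + 1 + d ≤ (up y).card + q := by exact_mod_cast hup y hy
    have hd3 : (q : ℚ) ≤ T.card := by exact_mod_cast hqt.le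
    have hpos : (0 : ℚ) < (d : ℚ) + 1 := by positivity
    have h1 : ∑ _z ∈ up y, (q : ℚ) / (d + 1) ≤ ∑ z ∈ up y, (q : ℚ) / (dn z).card := by
      refine sum_le_sum fun z hz => ?_
      have h2 : ((dn z).card : ℚ) ≤ d + 1 := by exact_mod_cast hdn y hy z hz
      have h3 : (0 : ℚ) < (dn z).card := by
        exact_mod_cast card_pos.2 ⟨y, mem_filter.2 ⟨hy, (mem_filter.1 hz).2⟩⟩
      gcongr
    refine le_trans ?_ h1
    rw [sum_const, nsmul_eq_mul, ← mul_div_assoc, le_div_iff₀ hpos]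
    nlinarith [mul_nonneg (sub_nonneg.2 hd1) (sub_nonneg.2 hd3),
      mul_le_mul_of_nonneg_right hd2 (Nat.cast_nonneg q : (0 : ℚ) ≤ q)]
  have hhigh : ∑ y ∈ B, ∑ z ∈ up y, (q : ℚ) / (dn z).card ≤ ∑ _z ∈ K, (q : ℚ) := by
    simp only [up, sum_filter]
    rw [sum_comm]
    refine sum_le_sum fun z _ => ?_
    rw [← sum_filter, sum_const, nsmul_eq_mul]
    change ((dn z).card : ℚ) * (q / (dn z).card) ≤ q
    rcases eq_or_ne ((dn z).card : ℚ) 0 with h | h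
    · rw [h, zero_mul]; exact Nat.cast_nonneg q
    · rw [mul_div_cancel₀ _ h]
  have hfin := (sum_le_sum hlow).trans hhigh
  rw [sum_const, sum_const, nsmul_eq_mul, nsmul_eq_mul, hB, hK] at hfin
  have hTpos : (0 : ℚ) < T.card := by exact_mod_cast card_pos.2 hT
  push_cast at hfin
  nlinarith

theorem ProperOn.piecewise {G : SimpleGraph V} {S B : Finset V} {f g : V → α} {A : Finset α}
    (hf : ProperOn G (S \ B) f) (hg : ProperOn G B g) (hfA : ∀ x ∈ S, x ∉ B → f x ∈ A)
    (hgA : ∀ x ∈ B, g x ∉ A) : ProperOn G S (B.piecewise g f) := by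
  intro x hx y hy hxy
  by_cases hxB : x ∈ B <;> by_cases hyB : y ∈ B <;> simp only [hxB, hyB, not_false_eq_true,
    piecewise_eq_of_mem, piecewise_eq_of_notMem]
  · exact hg x hxB y hyB hxy
  · exact fun h => hgA x hxB (h ▸ hfA y hy hyB)
  · exact fun h => hgA y hyB (h ▸ hfA x hx hxB)
  · exact hf x (mem_sdiff.2 ⟨hx, hxB⟩) y (mem_sdiff.2 ⟨hy, hyB⟩) hxy

theorem colorClass_piecewise_of_mem {S B : Finset V} {f g : V → α} {A : Finset α}
    (hfB : ∀ x ∈ B, f x ∉ A) (hgA : ∀ x ∈ B, g x ∉ A) {c : α} (hc : c ∈ A) :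
    colorClass S (B.piecewise g f) c = colorClass S f c := by
  refine filter_congr fun x _ => ?_
  by_cases hxB : x ∈ B
  · rw [piecewise_eq_of_mem _ _ _ hxB]
    exact ⟨fun h => absurd (h ▸ hc) (hgA x hxB), fun h => absurd (h ▸ hc) (hfB x hxB)⟩
  · rw [piecewise_eq_of_notMem _ _ _ hxB]

theorem colorClass_piecewise_of_notMem {S B : Finset V} {f g : V → α} {A : Finset α}
    (hBS : B ⊆ S) (hfA : ∀ x ∈ S, x ∉ B → f x ∈ A) {c : α} (hc : c ∉ A) :
    colorClass S (B.piecewise g f) c = colorClass B g c := by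
  ext x
  simp only [colorClass, mem_filter]
  by_cases hxB : x ∈ B
  · simp [hxB, hBS hxB]
  · simp only [hxB, not_false_eq_true, piecewise_eq_of_notMem, false_and, iff_false, not_and]
    exact fun hx h => hc (h ▸ hfA x hx hxB)

theorem exists_color_not_adjacent (G : SimpleGraph V) (B : Finset V) (g : V → α) (C : Finset α)
    (x : V) (h : (nbrsIn G B x).card < C.card) :
    ∃ c ∈ C, ∀ y ∈ B, g y = c → ¬ G.Adj x y := by
  obtain ⟨c, hc, hcn⟩ := exists_mem_notMem_of_card_lt_card
    (lt_of_le_of_lt (card_image_le (s := nbrsIn G B x) (f := g)) h)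
  exact ⟨c, hc, fun y hy hyc hxy => hcn (mem_image.2 ⟨y, mem_filter.2 ⟨hy, hxy⟩, hyc⟩)⟩

/-- `f` is a proper colouring of `G` on `S` with colours in `C` in which every class has size `s`. -/
def IsEquitableOn (G : SimpleGraph V) (S : Finset V) (C : Finset α) (s : ℕ) (f : V → α) : Prop :=
  (∀ x ∈ S, f x ∈ C) ∧ ProperOn G S f ∧ ∀ c ∈ C, (colorClass S f c).card = s

/-- `f` is a proper colouring of `G` on `S` with colours in `C` in which every class has size `s`,
up to moving one vertex from class `p` to class `v`. -/
def IsNearlyEquitableOn (G : SimpleGraph V) (S : Finset V) (C : Finset α) (s : ℕ) (v p : α)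
    (f : V → α) : Prop :=
  (∀ x ∈ S, f x ∈ C) ∧ ProperOn G S f ∧ ∀ c ∈ C,
    (colorClass S f c).card + (if c = v then 1 else 0) = s + if c = p then 1 else 0

theorem IsNearlyEquitableOn.exists_of_reach {G : SimpleGraph V} {S : Finset V} {C A : Finset α}
    {s : ℕ} {v p : α} {f : V → α} (hf : IsNearlyEquitableOn G S C s v p f) (hAC : A ⊆ C)
    (hp : p ∈ A) (h : ReachIn (Movable G S f) A p v) : ∃ f', IsEquitableOn G S C s f' := by
  obtain ⟨f', hf', hD, hcard, -⟩ := exists_shift G S f hf.2.1 v A p hp h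
  refine ⟨f', fun x hx => ?_, hf', fun c hc => ?_⟩
  · by_cases hxx : f' x = f x
    · rw [hxx]; exact hf.1 x hx
    · exact hAC (hD x hx hxx).2
  · have h1 := hcard c
    have h2 := hf.2.2 c hc
    omega

theorem IsNearlyEquitableOn.card_outside {G : SimpleGraph V} {S : Finset V} {C A : Finset α}
    {s : ℕ} {v p : α} {f : V → α} (hf : IsNearlyEquitableOn G S C s v p f)
    (hv : v ∈ A) (hpC : p ∈ C) (hp : p ∉ A) :
    (S.filter fun y => f y ∉ A).card = (C \ A).card * s + 1 := by
  rw [card_eq_sum_card_fiberwise (s := S.filter fun y => f y ∉ A) (f := f) (t := C \ A)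
    (fun y hy => mem_sdiff.2 ⟨hf.1 y (mem_filter.1 hy).1, (mem_filter.1 hy).2⟩)]
  have h1 : ∀ c ∈ C \ A, ((S.filter fun y => f y ∉ A).filter fun y => f y = c).card =
      s + if c = p then 1 else 0 := by
    intro c hc
    obtain ⟨hcC, hcA⟩ := mem_sdiff.1 hc
    have h2 := hf.2.2 c hcC
    rw [if_neg (ne_of_mem_of_not_mem hv hcA).symm, add_zero] at h2
    rw [← h2]
    congr 1
    ext y
    simp only [colorClass, mem_filter]
    constructor
    · rintro ⟨⟨h1, _⟩, h2⟩; exact ⟨h1, h2⟩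
    · rintro ⟨h1, rfl⟩; exact ⟨⟨h1, hcA⟩, rfl⟩
  rw [sum_congr rfl h1, sum_add_distrib, sum_const, smul_eq_mul, sum_ite_eq',
    if_pos (mem_sdiff.2 ⟨hpC, hp⟩)]

/-- Some class other than the small one is accessible. -/
theorem IsNearlyEquitableOn.exists_ne {G : SimpleGraph V} {S : Finset V} {C A : Finset α}
    {s : ℕ} {v p : α} {f : V → α} (hf : IsNearlyEquitableOn G S C s v p f) (hAC : A ⊆ C)
    (hdeg : ∀ x ∈ S, (nbrsIn G S x).card < C.card)
    (hv : v ∈ A) (hpC : p ∈ C) (hp : p ∉ A)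
    (hBA : ∀ y ∈ S, f y ∉ A → ∀ c ∈ A, ∃ z ∈ S, f z = c ∧ G.Adj y z) : ∃ a ∈ A, a ≠ v := by
  by_contra hcon
  push Not at hcon
  have hA : A = {v} := eq_singleton_iff_unique_mem.2 ⟨hv, hcon⟩
  have hB := hf.card_outside hv hpC hp
  have hsum := sum_sum_adj G (S.filter fun y => f y ∉ A) (colorClass S f v) fun _ => 1
  have h1 : ∑ _y ∈ S.filter (fun y => f y ∉ A), 1 ≤ ∑ y ∈ S.filter (fun y => f y ∉ A),
      ∑ _z ∈ nbrsIn G (colorClass S f v) y, 1 := by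
    refine sum_le_sum fun y hy => ?_
    obtain ⟨z, hz, hzv, hyz⟩ := hBA y (mem_filter.1 hy).1 (mem_filter.1 hy).2 v hv
    rw [← card_eq_sum_ones]
    exact card_pos.2 ⟨z, by simp [nbrsIn, colorClass, hz, hzv, hyz]⟩
  have h2 : ∑ z ∈ colorClass S f v, (nbrsIn G (S.filter fun y => f y ∉ A) z).card * 1 ≤
      ∑ _z ∈ colorClass S f v, (C.card - 1) := by
    refine sum_le_sum fun z hz => ?_
    have h3 := hdeg z (mem_filter.1 hz).1
    have h4 : (nbrsIn G (S.filter fun y => f y ∉ A) z).card ≤ (nbrsIn G S z).card :=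
      card_le_card (filter_subset_filter _ (filter_subset _ _))
    omega
  rw [hsum, ← card_eq_sum_ones, hB] at h1
  have h5 := h1.trans h2
  have h6 := hf.2.2 v (hAC hv)
  rw [if_pos rfl, if_neg (ne_of_mem_of_not_mem hv hp)] at h6
  rw [sum_const, smul_eq_mul, card_sdiff_of_subset hAC, hA, card_singleton] at h5
  have h7 : (colorClass S f v).card * (C.card - 1) ≤ s * (C.card - 1) :=
    Nat.mul_le_mul_right _ (by omega)
  rw [mul_comm s] at h7
  omega

theorem exists_equitable_of_nearly (G : SimpleGraph V) (S : Finset V) (C : Finset α) (s : ℕ)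
    (hdeg : ∀ x ∈ S, (nbrsIn G S x).card < C.card)
    (IH : ∀ B ⊆ S, ∀ C' : Finset α, (∃ x ∈ S, x ∉ B ∧ ∃ y ∈ S, G.Adj x y) →
      B.card = s * C'.card → (∀ x ∈ B, (nbrsIn G B x).card < C'.card) →
      ∃ g, IsEquitableOn G B C' s g) (n : ℕ) :
    ∀ A ⊆ C, (C \ A).card = n → ∀ (f : V → α) (v p : α), v ∈ A → p ∈ C →
      IsNearlyEquitableOn G S C s v p f → (∀ a ∈ A, ReachIn (Movable G S f) A a v) →
      ∃ g, IsEquitableOn G S C s g := by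
  induction n using Nat.strong_induction_on with
  | _ n ihn =>
  intro A hAC hn f v p hv hpC hf hA
  by_cases hp : p ∈ A
  · exact hf.exists_of_reach hAC hp (hA p hp)
  have hgrow : ∀ c ∈ C, c ∉ A → (C \ insert c A).card < n := by
    intro c hc hcA
    rw [← hn]
    refine card_lt_card ((ssubset_iff_of_subset (sdiff_subset_sdiff (Subset.refl _)
      (subset_insert _ _))).2 ⟨c, mem_sdiff.2 ⟨hc, hcA⟩, by simp⟩)
  by_cases hBA : ∀ y ∈ S, f y ∉ A → ∀ c ∈ A, ∃ z ∈ S, f z = c ∧ G.Adj y z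
  swap
  · push Not at hBA
    obtain ⟨y, hy, hyA, c, hc, hyc⟩ := hBA
    refine ihn _ (hgrow _ (hf.1 y hy) hyA) (insert (f y) A) (insert_subset (hf.1 y hy) hAC) rfl f v
      p (mem_insert_of_mem hv) hpC hf fun a ha => ?_
    have hA' : ∀ a ∈ A, ReachIn (Movable G S f) (insert (f y) A) a v := fun a ha =>
      (hA a ha).mono (subset_insert _ _) fun _ _ _ _ h => h
    rcases mem_insert.1 ha with rfl | ha
    · exact ReachIn.head (mem_insert_self _ _) (mem_insert_of_mem hc) ⟨y, hy, rfl, hyc⟩ (hA' c hc)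
    · exact hA' a ha
  have hB := hf.card_outside hv hpC hp
  obtain ⟨U, hUA, T, hTA, hT, hUT, hvT, hterm, hclosed⟩ := exists_terminal_set
    (Movable G S f) A v hv hA (hf.exists_ne hAC hdeg hv hpC hp hBA)
  have hcardAC : A.card + (C \ A).card = C.card := by
    rw [card_sdiff_of_subset hAC]
    have := card_le_card hAC
    omega
  obtain ⟨z, hz, hzT, y, hy, hyA, hsolo, hcase⟩ := exists_solo G S f A T U (C \ A).card s
    (fun x hx => by have := hdeg x hx; omega) hB hTA hUA hUT hT
    (fun W hW => by
      have h := hf.2.2 W (hAC (hTA hW))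
      rwa [if_neg (ne_of_mem_of_not_mem hW hvT), if_neg (ne_of_mem_of_not_mem (hTA hW) hp)] at h)
    hBA
    (fun x hx hxT c hc hcU hcT => by
      by_contra h
      push Not at h
      rcases hclosed (f x) hxT c hc ⟨x, hx, rfl, h⟩ with h | h
      · exact hcU h
      · exact hcT h)
  have hzA := hTA hzT
  have hzy : z ≠ y := fun h => hyA (h ▸ hzA)
  set B := (S.filter fun y => f y ∉ A).erase y with hBdef
  have hyB0 : y ∈ S.filter fun y => f y ∉ A := mem_filter.2 ⟨hy, hyA⟩
  have hBS : B ⊆ S := (erase_subset _ _).trans (filter_subset _ _)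
  have hmB : ∀ {x}, x ∈ B ↔ x ≠ y ∧ x ∈ S ∧ f x ∉ A := by simp [hBdef]
  have hnotB : ∀ {x}, x ∈ S → x ∉ B → x ≠ y → f x ∈ A := by
    intro x hx hxB hxy
    by_contra h
    exact hxB (hmB.2 ⟨hxy, hx, h⟩)
  have hzB : z ∉ B := fun h => (hmB.1 h).2.2 hzA
  have hyB : y ∉ B := fun h => (hmB.1 h).1 rfl
  obtain ⟨g, hgC, hg, hgs⟩ := IH B hBS (C \ A) ⟨y, hy, hyB, z, hz, hsolo.1⟩
    (by rw [card_erase_of_mem hyB0, hB, mul_comm]; rfl)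
    (fun x hx => by
      have h1 := card_add_card_nbrsIn_le G S f (Subset.refl A) x
        (hBA x (hmB.1 hx).2.1 (hmB.1 hx).2.2)
      have h2 : (nbrsIn G B x).card ≤ (nbrsIn G (S.filter fun y => f y ∉ A) x).card :=
        card_le_card (filter_subset_filter _ (erase_subset _ _))
      have h3 := hdeg x (hBS hx)
      omega)
  have hgA : ∀ x ∈ B, g x ∉ A := fun x hx => (mem_sdiff.1 (hgC x hx)).2
  rcases hcase with ⟨X, hX, hXz, hmove⟩ | ⟨hstuck, y', hy', hyA', hsolo', hne, hnadj⟩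
  · obtain ⟨f', hf', hD, hcard, hsub⟩ := exists_shift G S f hf.2.1 v (A.erase (f z)) X
      (mem_erase.2 ⟨hXz, hX⟩) (hterm (f z) hzT X hX hXz)
    have hfz : f' z = f z := by
      by_contra h
      have := (hD z hz h).1
      simp at this
    have hfout : ∀ x ∈ S, f x ∉ A → f' x = f x := by
      intro x hx hxA
      by_contra h
      exact hxA (mem_of_mem_erase (hD x hx h).1)
    have hfin : ∀ x ∈ S, f x ∈ A → f' x ∈ A := by
      intro x hx hxA
      by_cases h : f' x = f x
      · rwa [h]
      · exact mem_of_mem_erase (hD x hx h).2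
    set h1 := update (update f' z X) y (f z) with hh1
    have h1A : ∀ x ∈ S, x ∉ B → h1 x ∈ A := by
      intro x hx hxB
      by_cases hxy : x = y
      · rw [hxy, hh1, update_self]; exact hzA
      · rw [hh1, update_of_ne hxy]
        by_cases hxz : x = z
        · rw [hxz, update_self]; exact hX
        · rw [update_of_ne hxz]; exact hfin x hx (hnotB hx hxB hxy)
    have h1B : ∀ x ∈ B, h1 x ∉ A := by
      intro x hx
      obtain ⟨hxy, hxS, hxA⟩ := hmB.1 hx
      rw [hh1, update_of_ne hxy, update_of_ne (ne_of_mem_of_not_mem hx hzB), hfout x hxS hxA]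
      exact hxA
    have h1proper : ProperOn G (S \ B) h1 := by
      refine ProperOn.update ?_ ?_
      · refine ProperOn.mono (S := S) (ProperOn.update (hf'.mono (erase_subset _ _)) ?_)
          ((erase_subset _ _).trans sdiff_subset)
        exact fun w hw _ hwX => hmove w hw (hsub w hw hwX)
      · intro w hw hwy hwz hyw
        have hwS := (mem_sdiff.1 hw).1
        have hwz' : w ≠ z := by
          rintro rfl
          rw [update_self] at hwz
          exact hXz hwz
        rw [update_of_ne hwz'] at hwz
        have : f w = f z := by
          by_contra h
          have := (hD w hwS (by rw [hwz]; exact Ne.symm h)).2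
          simp [hwz] at this
        exact hwz' (hsolo.2 w hwS this hyw)
    refine ⟨B.piecewise g h1, fun x hx => ?_, h1proper.piecewise hg h1A hgA, fun c hc => ?_⟩
    · by_cases hxB : x ∈ B
      · rw [piecewise_eq_of_mem _ _ _ hxB]; exact (mem_sdiff.1 (hgC x hxB)).1
      · rw [piecewise_eq_of_notMem _ _ _ hxB]; exact hAC (h1A x hx hxB)
    · by_cases hcA : c ∈ A
      · rw [colorClass_piecewise_of_mem h1B hgA hcA]
        have e1 := hcard c
        have e2 := card_colorClass_update f' hz X c
        have e3 := card_colorClass_update (update f' z X) hy (f z) c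
        have e4 := hf.2.2 c hc
        rw [← hh1, update_of_ne hzy.symm, hfout y hy hyA,
          if_neg (ne_of_mem_of_not_mem hcA hyA)] at e3
        rw [if_neg (ne_of_mem_of_not_mem hcA hp)] at e4
        rw [hfz] at e2
        omega
      · rw [colorClass_piecewise_of_notMem hBS h1A hcA]
        exact hgs c (mem_sdiff.2 ⟨hc, hcA⟩)
  · have hdz : (nbrsIn G B z).card < (C \ A).card := by
      have e1 := card_add_card_nbrsIn_le G S f (erase_subset (f z) A) z fun c hc =>
        hstuck c (mem_of_mem_erase hc) (ne_of_mem_erase hc)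
      rw [card_erase_of_mem hzA] at e1
      have e2 : (nbrsIn G B z).card < (nbrsIn G (S.filter fun y => f y ∉ A) z).card := by
        refine card_lt_card ((ssubset_iff_of_subset
          (filter_subset_filter _ (erase_subset _ _))).2 ⟨y, ?_, ?_⟩)
        · exact mem_filter.2 ⟨hyB0, hsolo.1.symm⟩
        · exact fun h => hyB (mem_filter.1 h).1
      have e3 := hdeg z hz
      have e4 : 0 < A.card := card_pos.2 ⟨_, hzA⟩
      omega
    obtain ⟨Y, hY, hYz⟩ := exists_color_not_adjacent G B g (C \ A) z hdz
    obtain ⟨hYC, hYA⟩ := mem_sdiff.1 hY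
    set f1 := update f y (f z) with hf1
    set h := update (B.piecewise g f1) z Y with hh
    have hf1A : ∀ x ∈ S, x ∉ B → f1 x ∈ A := by
      intro x hx hxB
      by_cases hxy : x = y
      · rw [hxy, hf1, update_self]; exact hzA
      · rw [hf1, update_of_ne hxy]; exact hnotB hx hxB hxy
    have hf1B : ∀ x ∈ B, f1 x ∉ A := by
      intro x hx
      rw [hf1, update_of_ne (hmB.1 hx).1]; exact (hmB.1 hx).2.2
    have hhz : h z = Y := by rw [hh, update_self]
    have hhy : h y = f z := by
      rw [hh, update_of_ne hzy.symm, piecewise_eq_of_notMem _ _ _ hyB, hf1, update_self]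
    have hhB : ∀ x ∈ B, h x = g x := fun x hx => by
      rw [hh, update_of_ne (ne_of_mem_of_not_mem hx hzB), piecewise_eq_of_mem _ _ _ hx]
    have hhA : ∀ x, x ≠ z → x ≠ y → x ∉ B → h x = f x := fun x hxz hxy hxB => by
      rw [hh, update_of_ne hxz, piecewise_eq_of_notMem _ _ _ hxB, hf1, update_of_ne hxy]
    have hhmem : ∀ x ∈ S, h x ∈ A → x ≠ z ∧ x ∉ B := by
      refine fun x hx hxA => ⟨?_, fun hxB => hgA x hxB (hhB x hxB ▸ hxA)⟩
      rintro rfl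
      exact hYA (hhz ▸ hxA)
    have hnear : IsNearlyEquitableOn G S C s v Y h := by
      refine ⟨fun x hx => ?_, ProperOn.update (ProperOn.piecewise (A := A) ?_ hg
        (fun x hx => hf1A x (mem_of_mem_erase hx)) hgA) ?_, fun c hc => ?_⟩
      · by_cases hxz : x = z
        · rw [hxz, hhz]; exact hYC
        · by_cases hxB : x ∈ B
          · rw [hhB x hxB]; exact (mem_sdiff.1 (hgC x hxB)).1
          · by_cases hxy : x = y
            · rw [hxy, hhy]; exact hAC hzA
            · rw [hhA x hxz hxy hxB]; exact hf.1 x hx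
      · refine ProperOn.update (hf.2.1.mono fun x hx => ?_) fun w hw _ hwz hyw => ?_
        · exact mem_of_mem_erase (mem_sdiff.1 (mem_of_mem_erase hx)).1
        · have hw' := mem_erase.1 (mem_sdiff.1 hw).1
          exact hw'.1 (hsolo.2 w hw'.2 hwz hyw)
      · intro w hw _ hwY
        by_cases hwB : w ∈ B
        · rw [piecewise_eq_of_mem _ _ _ hwB] at hwY
          exact hYz w hwB hwY
        · rw [piecewise_eq_of_notMem _ _ _ hwB] at hwY
          exact absurd (hwY ▸ hf1A w hw hwB) hYA
      · have e1 := card_colorClass_update (B.piecewise g f1) hz Y c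
        rw [← hh, piecewise_eq_of_notMem _ _ _ hzB, hf1, update_of_ne hzy, ← hf1] at e1
        by_cases hcA : c ∈ A
        · rw [colorClass_piecewise_of_mem hf1B hgA hcA] at e1
          have e2 := card_colorClass_update f hy (f z) c
          rw [← hf1, if_neg (ne_of_mem_of_not_mem hcA hyA)] at e2
          have e3 := hf.2.2 c hc
          rw [if_neg (ne_of_mem_of_not_mem hcA hp)] at e3
          rw [if_neg (ne_of_mem_of_not_mem hcA hYA)] at e1 ⊢
          omega
        · rw [colorClass_piecewise_of_notMem hBS hf1A hcA, hgs c (mem_sdiff.2 ⟨hc, hcA⟩),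
            if_neg (ne_of_mem_of_not_mem hzA hcA).symm] at e1
          rw [if_neg (ne_of_mem_of_not_mem hv hcA).symm]
          exact e1
    have hy'B : y' ∈ B := hmB.2 ⟨hne, hy', hyA'⟩
    obtain ⟨hgyC, hgyA⟩ := mem_sdiff.1 (hgC y' hy'B)
    have hmov : ∀ w ∈ S, f w ∈ A → w ≠ z → ∀ d ∈ A, d ≠ f z →
        (∀ x ∈ S, f x = d → ¬ G.Adj w x) → Movable G S h (f w) d := by
      intro w hw hwA hwz d hd hdfz hwd
      refine ⟨w, hw, hhA w hwz (fun h => hyA (h ▸ hwA)) (fun h => (hmB.1 h).2.2 hwA), ?_⟩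
      intro x hx hxd
      obtain ⟨hxz, hxB⟩ := hhmem x hx (hxd ▸ hd)
      have hxy : x ≠ y := by
        rintro rfl
        exact hdfz (hxd ▸ hhy)
      exact hwd x hx (hhA x hxz hxy hxB ▸ hxd)
    have hreach : ∀ a ∈ A, a ≠ f z → ReachIn (Movable G S h) (insert (g y') A) a v := by
      intro a ha haz
      refine (hterm (f z) hzT a ha haz).mono ((erase_subset _ _).trans (subset_insert _ _)) ?_
      rintro _ hc d hd ⟨w, hw, rfl, hwd⟩
      exact hmov w hw (mem_of_mem_erase hc) (fun h => ne_of_mem_erase hc (h ▸ rfl)) d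
        (mem_of_mem_erase hd) (ne_of_mem_erase hd) hwd
    have hreachz : ReachIn (Movable G S h) (insert (g y') A) (f z) v := by
      obtain ⟨X, hX, ⟨w, hw, hwz, hwX⟩, -⟩ := (hA (f z) hzA).exists_step
        (ne_of_mem_of_not_mem hzT hvT).symm
      obtain ⟨hXz, hXA⟩ := mem_erase.1 hX
      have hwne : w ≠ z := by
        rintro rfl
        obtain ⟨x, hx, hxX, hwx⟩ := hstuck X hXA hXz
        exact hwX x hx hxX hwx
      refine ReachIn.head (mem_insert_of_mem hzA) (mem_insert_of_mem hXA) ?_ (hreach X hXA hXz)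
      exact hwz ▸ hmov w hw (hwz ▸ hzA) hwne X hXA hXz hwX
    refine ihn _ (hgrow (g y') hgyC hgyA) (insert (g y') A) (insert_subset hgyC hAC) rfl h v Y
      (mem_insert_of_mem hv) hYC hnear fun a ha => ?_
    rcases mem_insert.1 ha with rfl | ha
    · refine ReachIn.head (mem_insert_self _ _) (mem_insert_of_mem hzA)
        ⟨y', hy', hhB y' hy'B, fun x hx hxz hyx => ?_⟩ hreachz
      obtain ⟨hxz', hxB⟩ := hhmem x hx (hxz ▸ hzA)
      by_cases hxy : x = y
      · exact hnadj (hxy ▸ hyx.symm)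
      · exact hxz' (hsolo'.2 x hx (hhA x hxz' hxy hxB ▸ hxz) hyx)
    · by_cases haz : a = f z
      · exact haz ▸ hreachz
      · exact hreach a ha haz

theorem exists_equal_partition [Nonempty α] (s : ℕ) (C : Finset α) :
    ∀ S : Finset V, S.card = s * C.card →
      ∃ f : V → α, (∀ x ∈ S, f x ∈ C) ∧ ∀ c ∈ C, (colorClass S f c).card = s := by
  induction C using Finset.induction_on with
  | empty =>
    intro S hS
    rw [card_empty, mul_zero, card_eq_zero] at hS
    subst hS
    exact ⟨fun _ => Classical.arbitrary α, by simp, by simp⟩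
  | insert c C hc ih =>
    intro S hS
    rw [card_insert_of_notMem hc, mul_add, mul_one] at hS
    obtain ⟨B, hBS, hB⟩ := exists_subset_card_eq (s := S) (n := s * C.card) (by omega)
    obtain ⟨g, hgC, hg⟩ := ih B hB
    have hgc : ∀ x ∈ B, g x ∉ ({c} : Finset α) := fun x hx h =>
      hc (mem_singleton.1 h ▸ hgC x hx)
    refine ⟨B.piecewise g fun _ => c, fun x _ => ?_, fun d hd => ?_⟩
    · by_cases hxB : x ∈ B <;> simp [hxB, hgC]
    · rcases mem_insert.1 hd with rfl | hdC
      · have : colorClass S (B.piecewise g fun _ => d) d = S \ B := by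
          ext x
          by_cases hxB : x ∈ B
          · have := hgc x hxB
            simp only [mem_singleton] at this
            simp [colorClass, hxB, this]
          · simp [colorClass, hxB]
        rw [this, card_sdiff_of_subset hBS]
        omega
      · rw [colorClass_piecewise_of_notMem (A := {c}) hBS (by simp)
          (by rw [mem_singleton]; rintro rfl; exact hc hdC)]
        exact hg d hdC

/-- The number of ordered pairs of adjacent vertices of `S`. -/
noncomputable def dartCount (G : SimpleGraph V) (S : Finset V) : ℕ :=
  ((S ×ˢ S).filter fun e => G.Adj e.1 e.2).card

theorem dartCount_lt {G G' : SimpleGraph V} {B S : Finset V} (hG : G' ≤ G) (hBS : B ⊆ S)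
    {x y : V} (hx : x ∈ S) (hy : y ∈ S) (hxy : G.Adj x y) (hB : x ∈ B → ¬ G'.Adj x y) :
    dartCount G' B < dartCount G S := by
  refine card_lt_card ((ssubset_iff_of_subset fun e he => ?_).2 ⟨(x, y), ?_, ?_⟩)
  · simp only [mem_filter, mem_product] at he ⊢
    exact ⟨⟨hBS he.1.1, hBS he.1.2⟩, hG he.2⟩
  · simp [hx, hy, hxy]
  · simp only [mem_filter, mem_product]
    exact fun h => hB h.1.1 h.2

/-- **Hajnal–Szemerédi theorem**, for vertex sets whose size is divisible by the number of
colours. -/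
theorem exists_isEquitableOn [Nonempty α] (s : ℕ) (n : ℕ) :
    ∀ (G : SimpleGraph V) (S : Finset V) (C : Finset α), dartCount G S = n →
      S.card = s * C.card → (∀ x ∈ S, (nbrsIn G S x).card < C.card) →
      ∃ f : V → α, IsEquitableOn G S C s f := by
  induction n using Nat.strong_induction_on with
  | _ n ih =>
  intro G S C hn hcard hdeg
  by_cases hedge : ∃ u ∈ S, ∃ w ∈ S, G.Adj u w
  swap
  · push Not at hedge
    obtain ⟨f, hfC, hf⟩ := exists_equal_partition s C S hcard
    exact ⟨f, hfC, fun x hx y hy hxy => absurd hxy (hedge x hx y hy), hf⟩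
  obtain ⟨u, hu, w, hw, huw⟩ := hedge
  let G' : SimpleGraph V :=
    { Adj := fun x y => G.Adj x y ∧ x ≠ u ∧ y ≠ u
      symm := ⟨fun x y h => ⟨h.1.symm, h.2.2, h.2.1⟩⟩
      loopless := ⟨fun x h => G.loopless.irrefl x h.1⟩ }
  have hG' : G' ≤ G := fun x y h => h.1
  obtain ⟨f, hfC, hf, hfs⟩ := ih (dartCount G' S)
    (hn ▸ dartCount_lt hG' (Subset.refl S) hu hw huw fun _ h => h.2.1 rfl) G' S C rfl hcard
    fun x hx => lt_of_le_of_lt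
      (card_le_card fun y h => mem_nbrsIn.2 ((mem_nbrsIn.1 h).imp_right fun h => hG' h)) (hdeg x hx)
  obtain ⟨Y, hYC, hY⟩ := exists_color_not_adjacent G S f C u (hdeg u hu)
  refine exists_equitable_of_nearly G S C s hdeg ?_ (C \ {f u}).card {f u}
    (singleton_subset_iff.2 (hfC u hu)) rfl (update f u Y) (f u) Y (mem_singleton_self _) hYC
    ⟨fun x hx => ?_, ProperOn.update ?_ fun y hy _ => hY y hy, fun c hc => ?_⟩ ?_
  · rintro B hBS C' ⟨x, hx, hxB, y, hy, hxy⟩ hB hdegB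
    exact ih (dartCount G B) (hn ▸ dartCount_lt le_rfl hBS hx hy hxy fun h => absurd h hxB)
      G B C' rfl hB hdegB
  · by_cases hxu : x = u
    · rw [hxu, update_self]; exact hYC
    · rw [update_of_ne hxu]; exact hfC x hx
  · exact fun x hx y hy hxy => hf x (mem_of_mem_erase hx) y (mem_of_mem_erase hy)
      ⟨hxy, ne_of_mem_erase hx, ne_of_mem_erase hy⟩
  · rw [card_colorClass_update f hu Y c, hfs c hc]
  · intro a ha
    rw [mem_singleton.1 ha]
    exact ReflTransGen.refl

/-- **Hajnal–Szemerédi theorem**: a finite graph of maximum degree at most `r` has an equitable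
proper colouring with `r + 1` colours. -/
theorem exists_equitable_coloring [Fintype V] (G : SimpleGraph V) (r : ℕ)
    (hdeg : ∀ x, (nbrsIn G univ x).card ≤ r) :
    ∃ f : V → Fin (r + 1), (∀ x y, G.Adj x y → f x ≠ f y) ∧
      ∀ a b, (colorClass univ f a).card ≤ (colorClass univ f b).card + 1 := by
  obtain ⟨s, p, hp, hsp⟩ : ∃ s p, p ≤ r ∧ Fintype.card V + p = s * (r + 1) := by
    have h1 := Nat.div_add_mod (Fintype.card V + r) (r + 1)
    have h2 := Nat.mod_lt (Fintype.card V + r) (by omega : 0 < r + 1)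
    refine ⟨(Fintype.card V + r) / (r + 1), r - (Fintype.card V + r) % (r + 1), by omega, ?_⟩
    rw [mul_comm]
    omega
  let H : SimpleGraph (V ⊕ Fin p) := G ⊕g (⊤ : SimpleGraph (Fin p))
  obtain ⟨f, -, hf, hfs⟩ := exists_isEquitableOn (α := Fin (r + 1)) s _ H univ univ rfl
    (by simp [hsp]) (by
      rintro (x | i) -
      · have : nbrsIn H univ (Sum.inl x) = (nbrsIn G univ x).map .inl := by
          ext (y | j) <;> simp [nbrsIn, H]
        rw [this, card_map, card_fin]
        exact Nat.lt_succ_of_le (hdeg x)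
      · have : nbrsIn H univ (Sum.inr i) ⊆ (univ : Finset (Fin p)).map .inr := by
          rintro (y | j) <;> simp [nbrsIn, H]
        have := card_le_card this
        rw [card_map, card_fin] at this
        rw [card_fin]
        omega)
  have hsplit : ∀ c, (colorClass univ (fun x => f (Sum.inl x)) c).card +
      (colorClass univ (fun i => f (Sum.inr i)) c).card = s := by
    intro c
    rw [← hfs c (mem_univ c), ← card_map (f := (.inl : V ↪ V ⊕ Fin p)),
      ← card_map (f := (.inr : Fin p ↪ V ⊕ Fin p)), ← card_union_of_disjoint]
    · congr 1
      ext (y | j) <;> simp [colorClass]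
    · rw [disjoint_left]
      rintro (y | j) <;> simp
  have hone : ∀ c, (colorClass univ (fun i => f (Sum.inr i)) c).card ≤ 1 := by
    refine fun c => card_le_one.2 fun i hi j hj => ?_
    by_contra hij
    refine hf (Sum.inr i) (mem_univ _) (Sum.inr j) (mem_univ _) (by simpa [H] using hij) ?_
    exact (mem_colorClass.1 hi).2.trans (mem_colorClass.1 hj).2.symm
  refine ⟨fun x => f (Sum.inl x), fun x y hxy => ?_, fun a b => ?_⟩
  · exact hf (Sum.inl x) (mem_univ _) (Sum.inl y) (mem_univ _) (by simpa [H] using hxy)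
  · have h1 := hsplit a
    have h2 := hsplit b
    have h3 := hone b
    omega

end EquitableColoring

theorem stmt13 {V : Type*} [Fintype V] [DecidableEq V] (k : ℕ) (hk : 1 ≤ k)
    (E : Finset (V × V)) (hloop : ∀ p ∈ E, p.1 ≠ p.2)
    (hout : ∀ u : V, (E.filter fun p => p.1 = u).card ≤ k)
    (hin : ∀ v : V, (E.filter fun p => p.2 = v).card ≤ k) :
    ∃ f : V → Fin (2 * k + 1),
      (∀ p ∈ E, f p.1 ≠ f p.2) ∧
      ∀ x y : Fin (2 * k + 1),
        (Finset.univ.filter fun v => f v = x).card ≤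
          (Finset.univ.filter fun v => f v = y).card + 1 := by
  let G : SimpleGraph V :=
    { Adj := fun x y => (x, y) ∈ E ∨ (y, x) ∈ E
      symm := ⟨fun _ _ h => h.symm⟩
      loopless := ⟨fun _ h => h.elim (fun h => hloop _ h rfl) (fun h => hloop _ h rfl)⟩ }
  obtain ⟨f, hf, hcard⟩ := exists_equitable_coloring G (2 * k) fun x => by
    have hsub : nbrsIn G Finset.univ x ⊆
        (E.filter fun p => p.1 = x).image Prod.snd ∪ (E.filter fun p => p.2 = x).image Prod.fst := by
      intro y hy
      rw [Finset.mem_union, Finset.mem_image, Finset.mem_image]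
      rcases (mem_nbrsIn.1 hy).2 with h | h
      · exact Or.inl ⟨(x, y), Finset.mem_filter.2 ⟨h, rfl⟩, rfl⟩
      · exact Or.inr ⟨(y, x), Finset.mem_filter.2 ⟨h, rfl⟩, rfl⟩
    have h1 := (Finset.card_le_card hsub).trans (Finset.card_union_le _ _)
    have h2 := (Finset.card_image_le (s := E.filter fun p => p.1 = x) (f := Prod.snd)).trans
      (hout x)
    have h3 := (Finset.card_image_le (s := E.filter fun p => p.2 = x) (f := Prod.fst)).trans
      (hin x)
    omega
  refine ⟨f, fun p hp => hf p.1 p.2 (Or.inl hp), fun x y => ?_⟩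
  have h := hcard x y
  unfold colorClass at h
  convert h
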